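/- Let A be an approximately amenable Banach algebra, X and Y left Banach A-modules, and f: X → Y a bounded left A-module morphism admitting a bounded linear right inverse F: Y → X. Then there exists a net (f_α) of bounded linear right inverses of f such that ‖a·f_α − f_α·a‖ → 0 for every a ∈ A, where B(Y,X) carries the bimodule actions (a·g)(y) = a(g(y)) and (g·a)(y) = g(a·y). -/

import Mathlib

open Filter Topology TensorProduct

noncomputable section


open Filter Topology TensorProduct


/-! Banach bimodules and derivations -/

variable (A : Type) [NonUnitalNormedRing A] [NormedSpace ℂ A]
  [IsScalarTower ℂ A A] [SMulCommClass ℂ A A]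

/-- A Banach `A`-bimodule structure on a Banach space `X`: `l a` is the left action of `a`,
`r a` is the right action of `a`. -/
structure BanachBimod (X : Type) [NormedAddCommGroup X] [NormedSpace ℂ X] where
  l : A → X →L[ℂ] X
  r : A → X →L[ℂ] X
  l_add : ∀ a b, l (a + b) = l a + l b
  l_smul : ∀ (c : ℂ) a, l (c • a) = c • l a
  r_add : ∀ a b, r (a + b) = r a + r b
  r_smul : ∀ (c : ℂ) a, r (c • a) = c • r a
  l_bound : ∃ C : ℝ, ∀ a, ‖l a‖ ≤ C * ‖a‖
  r_bound : ∃ C : ℝ, ∀ a, ‖r a‖ ≤ C * ‖a‖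
  l_mul : ∀ a b, l (a * b) = (l a).comp (l b)
  r_mul : ∀ a b, r (a * b) = (r b).comp (r a)
  lr_comm : ∀ a b, (l a).comp (r b) = (r b).comp (l a)

variable {A}

namespace BanachBimod

variable {X : Type} [NormedAddCommGroup X] [NormedSpace ℂ X]

/-- The dual bimodule structure on `X →L[ℂ] ℂ`. -/
def dual (M : BanachBimod A X) : BanachBimod A (X →L[ℂ] ℂ) where
  l a := (ContinuousLinearMap.compL ℂ X X ℂ).flip (M.r a)
  r a := (ContinuousLinearMap.compL ℂ X X ℂ).flip (M.l a)
  l_add a b := by simp only [M.r_add, map_add]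
  l_smul c a := by simp only [M.r_smul, map_smul]
  r_add a b := by simp only [M.l_add, map_add]
  r_smul c a := by simp only [M.l_smul, map_smul]
  l_bound := by
    obtain ⟨C, hC⟩ := M.r_bound
    refine ⟨‖(ContinuousLinearMap.compL ℂ X X ℂ).flip‖ * C, fun a => ?_⟩
    calc ‖(ContinuousLinearMap.compL ℂ X X ℂ).flip (M.r a)‖
        ≤ ‖(ContinuousLinearMap.compL ℂ X X ℂ).flip‖ * ‖M.r a‖ :=
          (ContinuousLinearMap.compL ℂ X X ℂ).flip.le_opNorm _
      _ ≤ ‖(ContinuousLinearMap.compL ℂ X X ℂ).flip‖ * (C * ‖a‖) := by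
          exact mul_le_mul_of_nonneg_left (hC a) (norm_nonneg _)
      _ = ‖(ContinuousLinearMap.compL ℂ X X ℂ).flip‖ * C * ‖a‖ := by ring
  r_bound := by
    obtain ⟨C, hC⟩ := M.l_bound
    refine ⟨‖(ContinuousLinearMap.compL ℂ X X ℂ).flip‖ * C, fun a => ?_⟩
    calc ‖(ContinuousLinearMap.compL ℂ X X ℂ).flip (M.l a)‖
        ≤ ‖(ContinuousLinearMap.compL ℂ X X ℂ).flip‖ * ‖M.l a‖ :=
          (ContinuousLinearMap.compL ℂ X X ℂ).flip.le_opNorm _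
      _ ≤ ‖(ContinuousLinearMap.compL ℂ X X ℂ).flip‖ * (C * ‖a‖) := by
          exact mul_le_mul_of_nonneg_left (hC a) (norm_nonneg _)
      _ = ‖(ContinuousLinearMap.compL ℂ X X ℂ).flip‖ * C * ‖a‖ := by ring
  l_mul a b := by
    ext φ x
    simp [M.r_mul]
  r_mul a b := by
    ext φ x
    simp [M.l_mul]
  lr_comm a b := by
    ext φ x
    simpa using congrArg φ (congrFun (congrArg DFunLike.coe (M.lr_comm b a)) x)

/-- A continuous derivation from `A` into the bimodule `X`. -/
def IsDerivation (M : BanachBimod A X) (D : A →L[ℂ] X) : Prop :=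
  ∀ a b, D (a * b) = M.l a (D b) + M.r b (D a)

/-- `D` is inner. -/
def Inner (M : BanachBimod A X) (D : A →L[ℂ] X) : Prop :=
  ∃ x : X, ∀ a, D a = M.l a x - M.r a x

/-- `D` is approximately inner: some net of inner derivations converges to `D` pointwise
in norm. -/
def ApproxInner (M : BanachBimod A X) (D : A →L[ℂ] X) : Prop :=
  ∃ (ι : Type) (φ : Filter ι) (x : ι → X), φ.NeBot ∧
    ∀ a, Tendsto (fun i => M.l a (x i) - M.r a (x i)) φ (𝓝 (D a))

/-- `D` is sequentially approximately inner. -/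
def SeqApproxInner (M : BanachBimod A X) (D : A →L[ℂ] X) : Prop :=
  ∃ x : ℕ → X, ∀ a, Tendsto (fun n => M.l a (x n) - M.r a (x n)) atTop (𝓝 (D a))

/-- `D` is boundedly approximately inner: the approximating net of inner derivations is
bounded as a net of operators from `A` to `X`. -/
def BddApproxInner (M : BanachBimod A X) (D : A →L[ℂ] X) : Prop :=
  ∃ (ι : Type) (φ : Filter ι) (x : ι → X), φ.NeBot ∧
    (∃ C : ℝ, ∀ i a, ‖M.l a (x i) - M.r a (x i)‖ ≤ C * ‖a‖) ∧
    ∀ a, Tendsto (fun i => M.l a (x i) - M.r a (x i)) φ (𝓝 (D a))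

/-- `D` is uniformly approximately inner: inner derivations approximate `D` uniformly
on the unit ball of `A`, i.e. in operator norm. -/
def UnifApproxInner (M : BanachBimod A X) (D : A →L[ℂ] X) : Prop :=
  ∃ (ι : Type) (φ : Filter ι) (x : ι → X), φ.NeBot ∧
    ∀ ε > (0 : ℝ), ∀ᶠ i in φ, ∀ a, ‖D a - (M.l a (x i) - M.r a (x i))‖ ≤ ε * ‖a‖

/-- A derivation into the dual module `X →L[ℂ] ℂ` is weak* approximately inner. -/
def WeakStarApproxInner (M : BanachBimod A X) (D : A →L[ℂ] (X →L[ℂ] ℂ)) : Prop :=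
  ∃ (ι : Type) (φ : Filter ι) (x : ι → (X →L[ℂ] ℂ)), φ.NeBot ∧
    ∀ (a : A) (ξ : X),
      Tendsto (fun i => (M.dual.l a (x i) - M.dual.r a (x i)) ξ) φ (𝓝 (D a ξ))

end BanachBimod

variable (A)

/-- `A` is contractible: every continuous derivation into every Banach `A`-bimodule is inner. -/
def Contractible : Prop :=
  ∀ (X : Type) (_ : NormedAddCommGroup X) (_ : NormedSpace ℂ X) (M : BanachBimod A X)
    (D : A →L[ℂ] X), M.IsDerivation D → M.Inner D

def ApproximatelyContractible : Prop :=
  ∀ (X : Type) (_ : NormedAddCommGroup X) (_ : NormedSpace ℂ X) (M : BanachBimod A X)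
    (D : A →L[ℂ] X), M.IsDerivation D → M.ApproxInner D

def SeqApproximatelyContractible : Prop :=
  ∀ (X : Type) (_ : NormedAddCommGroup X) (_ : NormedSpace ℂ X) (M : BanachBimod A X)
    (D : A →L[ℂ] X), M.IsDerivation D → M.SeqApproxInner D

def UnifApproximatelyContractible : Prop :=
  ∀ (X : Type) (_ : NormedAddCommGroup X) (_ : NormedSpace ℂ X) (M : BanachBimod A X)
    (D : A →L[ℂ] X), M.IsDerivation D → M.UnifApproxInner D

def ApproximatelyAmenable : Prop :=
  ∀ (X : Type) (_ : NormedAddCommGroup X) (_ : NormedSpace ℂ X) (M : BanachBimod A X)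
    (D : A →L[ℂ] (X →L[ℂ] ℂ)), M.dual.IsDerivation D → M.dual.ApproxInner D

def SeqApproximatelyAmenable : Prop :=
  ∀ (X : Type) (_ : NormedAddCommGroup X) (_ : NormedSpace ℂ X) (M : BanachBimod A X)
    (D : A →L[ℂ] (X →L[ℂ] ℂ)), M.dual.IsDerivation D → M.dual.SeqApproxInner D

def BddApproximatelyAmenable : Prop :=
  ∀ (X : Type) (_ : NormedAddCommGroup X) (_ : NormedSpace ℂ X) (M : BanachBimod A X)
    (D : A →L[ℂ] (X →L[ℂ] ℂ)), M.dual.IsDerivation D → M.dual.BddApproxInner D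

def WeakStarApproximatelyAmenable : Prop :=
  ∀ (X : Type) (_ : NormedAddCommGroup X) (_ : NormedSpace ℂ X) (M : BanachBimod A X)
    (D : A →L[ℂ] (X →L[ℂ] ℂ)), M.dual.IsDerivation D → M.WeakStarApproxInner D


/-- The projective tensor "seminorm" on the algebraic tensor product `V ⊗[ℂ] W`, relative to
given (semi)norm functions on the factors: the infimum of `∑ να aₙ * νβ bₙ` over all
representations `t = ∑ aₙ ⊗ bₙ`. -/
def projTensorSN {V W : Type} [AddCommGroup V] [Module ℂ V] [AddCommGroup W] [Module ℂ W]
    (να : V → ℝ) (νβ : W → ℝ) (t : V ⊗[ℂ] W) : ℝ :=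
  sInf {r : ℝ | ∃ L : List (V × W), t = (L.map fun p => p.1 ⊗ₜ[ℂ] p.2).sum ∧
      r = (L.map fun p => να p.1 * νβ p.2).sum}

section SN

variable (C : Type) [NonUnitalRing C] [Module ℂ C] [IsScalarTower ℂ C C] [SMulCommClass ℂ C C]

/-- The left action `u ↦ a·u` of `C` on `C ⊗[ℂ] C`. -/
def tactL (a : C) : C ⊗[ℂ] C →ₗ[ℂ] C ⊗[ℂ] C :=
  TensorProduct.map (LinearMap.mulLeft ℂ a) LinearMap.id

/-- The right action `u ↦ u·a` of `C` on `C ⊗[ℂ] C`. -/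
def tactR (a : C) : C ⊗[ℂ] C →ₗ[ℂ] C ⊗[ℂ] C :=
  TensorProduct.map LinearMap.id (LinearMap.mulRight ℂ a)

/-- The multiplication map `π : C ⊗ C → C`. -/
def tpi : C ⊗[ℂ] C →ₗ[ℂ] C := LinearMap.mul' ℂ C

variable (ν : C → ℝ)

/-- Pseudo-amenability of the algebra `C` relative to the (semi)norm function `ν`:
there is an approximate diagonal, i.e. a net `(u_i) ⊂ C ⊗̂ C` with
`a·u_i − u_i·a → 0` (in the projective tensor seminorm) and `π(u_i)a → a` for all `a ∈ C`. -/
def PseudoAmenableSN : Prop :=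
  ∃ (ι : Type) (φ : Filter ι) (u : ι → C ⊗[ℂ] C), φ.NeBot ∧
    (∀ a : C, Tendsto (fun i => projTensorSN ν ν (tactL C a (u i) - tactR C a (u i))) φ (𝓝 0)) ∧
    (∀ a : C, Tendsto (fun i => ν (tpi C (u i) * a - a)) φ (𝓝 0))

/-- Sequential pseudo-amenability. -/
def SeqPseudoAmenableSN : Prop :=
  ∃ u : ℕ → C ⊗[ℂ] C,
    (∀ a : C, Tendsto (fun n => projTensorSN ν ν (tactL C a (u n) - tactR C a (u n))) atTop (𝓝 0)) ∧
    (∀ a : C, Tendsto (fun n => ν (tpi C (u n) * a - a)) atTop (𝓝 0))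

/-- Pseudo-contractibility: there is a central approximate diagonal. -/
def PseudoContractibleSN : Prop :=
  ∃ (ι : Type) (φ : Filter ι) (u : ι → C ⊗[ℂ] C), φ.NeBot ∧
    (∀ (a : C) i, tactL C a (u i) = tactR C a (u i)) ∧
    (∀ a : C, Tendsto (fun i => ν (tpi C (u i) * a - a)) φ (𝓝 0))

/-- Bounded pseudo-contractibility: a central approximate diagonal `(u_i)` such that
`(π(u_i))` is a multiplier-bounded approximate identity. -/
def BddPseudoContractibleSN : Prop :=
  ∃ (ι : Type) (φ : Filter ι) (u : ι → C ⊗[ℂ] C), φ.NeBot ∧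
    (∀ (a : C) i, tactL C a (u i) = tactR C a (u i)) ∧
    (∀ a : C, Tendsto (fun i => ν (tpi C (u i) * a - a)) φ (𝓝 0)) ∧
    (∃ K : ℝ, 0 < K ∧ ∀ i (a : C), ν (tpi C (u i) * a) ≤ K * ν a)

end SN

section Normed

variable (A : Type) [NonUnitalNormedRing A] [NormedSpace ℂ A]
  [IsScalarTower ℂ A A] [SMulCommClass ℂ A A]

def PseudoAmenable : Prop := PseudoAmenableSN A (fun a => ‖a‖)
def SeqPseudoAmenable : Prop := SeqPseudoAmenableSN A (fun a => ‖a‖)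
def PseudoContractible : Prop := PseudoContractibleSN A (fun a => ‖a‖)
def BddPseudoContractible : Prop := BddPseudoContractibleSN A (fun a => ‖a‖)

/-- `A` has a (two-sided) approximate identity. -/
def HasApproxIdentity : Prop :=
  ∃ (ι : Type) (φ : Filter ι) (e : ι → A), φ.NeBot ∧
    ∀ a : A, Tendsto (fun i => e i * a) φ (𝓝 a) ∧ Tendsto (fun i => a * e i) φ (𝓝 a)

/-- `A` has a bounded (two-sided) approximate identity. -/
def HasBoundedApproxIdentity : Prop :=
  ∃ (ι : Type) (φ : Filter ι) (e : ι → A), φ.NeBot ∧ (∃ C : ℝ, ∀ i, ‖e i‖ ≤ C) ∧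
    ∀ a : A, Tendsto (fun i => e i * a) φ (𝓝 a) ∧ Tendsto (fun i => a * e i) φ (𝓝 a)

/-- `A` has a left approximate identity. -/
def HasLeftApproxIdentity : Prop :=
  ∃ (ι : Type) (φ : Filter ι) (e : ι → A), φ.NeBot ∧
    ∀ a : A, Tendsto (fun i => e i * a) φ (𝓝 a)

/-- `A` has a right approximate identity. -/
def HasRightApproxIdentity : Prop :=
  ∃ (ι : Type) (φ : Filter ι) (e : ι → A), φ.NeBot ∧
    ∀ a : A, Tendsto (fun i => a * e i) φ (𝓝 a)

/-- `A` has a central approximate identity. -/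
def HasCentralApproxIdentity : Prop :=
  ∃ (ι : Type) (φ : Filter ι) (e : ι → A), φ.NeBot ∧
    (∀ (a : A) i, a * e i = e i * a) ∧
    ∀ a : A, Tendsto (fun i => e i * a) φ (𝓝 a)

/-- `A` is approximately biprojective: there is a net `(T_α)` of bounded `A`-bimodule morphisms
`A → A ⊗̂ A` with `π ∘ T_α (a) → a` for every `a`. -/
def ApproxBiprojective : Prop :=
  ∃ (ι : Type) (φ : Filter ι) (T : ι → (A →ₗ[ℂ] A ⊗[ℂ] A)), φ.NeBot ∧
    (∀ i, ∃ C : ℝ, ∀ a, projTensorSN (fun x : A => ‖x‖) (fun x : A => ‖x‖) (T i a) ≤ C * ‖a‖) ∧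
    (∀ i (a b : A), T i (a * b) = tactL A a (T i b) ∧ T i (a * b) = tactR A b (T i a)) ∧
    (∀ a : A, Tendsto (fun i => tpi A (T i a)) φ (𝓝 a))

end Normed


end

/-- A left Banach `A`-module structure on a Banach space `X`. -/
structure LeftBanachMod (A : Type) [NonUnitalNormedRing A] [NormedSpace ℂ A]
    [IsScalarTower ℂ A A] [SMulCommClass ℂ A A]
    (X : Type) [NormedAddCommGroup X] [NormedSpace ℂ X] where
  l : A → X →L[ℂ] X
  l_add : ∀ a b, l (a + b) = l a + l b
  l_smul : ∀ (c : ℂ) a, l (c • a) = c • l a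
  l_bound : ∃ C : ℝ, ∀ a, ‖l a‖ ≤ C * ‖a‖
  l_mul : ∀ a b, l (a * b) = (l a).comp (l b)

/-! Auxiliary results -/

lemma aux_exists_functional {E : Type} [NormedAddCommGroup E] [NormedSpace ℂ E]
    (W : Submodule ℂ E) (x : E) (hx : x ∉ W.topologicalClosure) :
    ∃ Φ : E →L[ℂ] ℂ, (∀ w ∈ W, Φ w = 0) ∧ Φ x ≠ 0 := by
  have : IsClosed (W.topologicalClosure : Set E) := W.isClosed_topologicalClosure
  have h : (W.topologicalClosure.mkQ x) ≠ 0 := by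
    simpa [Submodule.Quotient.mk_eq_zero] using hx
  obtain ⟨g, -, hg⟩ := exists_dual_vector ℂ (W.topologicalClosure.mkQ x) (norm_ne_zero_iff.2 h)
  refine ⟨g.comp W.topologicalClosure.mkQL, fun w hw => ?_, ?_⟩
  · have : W.topologicalClosure.mkQ w = 0 := by
      simpa [Submodule.Quotient.mk_eq_zero] using W.le_topologicalClosure hw
    have h2 : g (W.topologicalClosure.mkQ w) = 0 := by rw [this, map_zero]
    exact h2
  · have h2 : g (W.topologicalClosure.mkQ x) ≠ 0 := by
      rw [hg]
      exact Complex.ofReal_ne_zero.2 (norm_ne_zero_iff.2 h)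
    exact h2

/-- Approximate amenability implies that derivations into arbitrary bimodules are
approximable by inner ones on finite sets. -/
lemma aux_approx_contractible
    {A : Type} [NonUnitalNormedRing A] [NormedSpace ℂ A]
    [IsScalarTower ℂ A A] [SMulCommClass ℂ A A]
    (hA : ApproximatelyAmenable A)
    {Z : Type} [NormedAddCommGroup Z] [NormedSpace ℂ Z] (M : BanachBimod A Z)
    (D : A →L[ℂ] Z) (hD : M.IsDerivation D) (S : Finset A) (ε : ℝ) (hε : 0 < ε) :
    ∃ z : Z, ∀ a ∈ S, ‖D a - (M.l a z - M.r a z)‖ < ε := by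
  classical
  obtain ⟨ι, φ, ξ, hφ, hξ⟩ := hA (Z →L[ℂ] ℂ) _ _ M.dual
    ((NormedSpace.inclusionInDoubleDual ℂ Z).comp D) (by
      intro a b
      ext ψ
      simp only [ContinuousLinearMap.comp_apply, hD a b]
      simp [BanachBimod.dual, NormedSpace.dual_def])
  let T : Z →L[ℂ] (S → Z) := ContinuousLinearMap.pi fun a => M.l a - M.r a
  let x : S → Z := fun a => D a
  have key : x ∈ (LinearMap.range (T : Z →ₗ[ℂ] (S → Z))).topologicalClosure := by
    by_contra hx
    obtain ⟨Φ, h0, h1⟩ := aux_exists_functional _ x hx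
    let ψ : S → (Z →L[ℂ] ℂ) := fun a => Φ.comp (ContinuousLinearMap.single ℂ (fun _ : S => Z) a)
    have hΦ : ∀ v : S → Z, Φ v = ∑ a, ψ a (v a) := by
      intro v
      conv_lhs => rw [← Finset.univ_sum_single v]
      rw [map_sum]
      rfl
    have hz : ∑ a : S, ((ψ a).comp (M.l a) - (ψ a).comp (M.r a)) = 0 := by
      ext z
      have := h0 (T z) ⟨z, rfl⟩
      rw [hΦ] at this
      simpa [T] using this
    have hlim : Tendsto (fun i => ∑ a : S,
        (M.dual.dual.l (a : A) (ξ i) - M.dual.dual.r (a : A) (ξ i)) (ψ a)) φ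
        (𝓝 (∑ a : S, ψ a (D a))) := by
      refine tendsto_finsetSum _ fun a _ => ?_
      exact ((ContinuousLinearMap.apply ℂ ℂ (ψ a)).continuous.tendsto _).comp (hξ a)
    have hzero : ∀ i, ∑ a : S,
        (M.dual.dual.l (a : A) (ξ i) - M.dual.dual.r (a : A) (ξ i)) (ψ a) = 0 := by
      intro i
      have := congrArg (ξ i) hz
      rw [map_sum, map_zero] at this
      rw [← this]
      refine Finset.sum_congr rfl fun a _ => ?_
      rw [map_sub]
      rfl
    simp only [hzero] at hlim
    have := tendsto_nhds_unique hlim tendsto_const_nhds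
    exact h1 ((hΦ x).trans this)
  have key' : x ∈ closure (Set.range T) := key
  obtain ⟨_, ⟨z, rfl⟩, hz⟩ := Metric.mem_closure_iff.1 key' ε hε
  refine ⟨z, fun a ha => ?_⟩
  have := (dist_pi_lt_iff hε).1 hz ⟨a, ha⟩
  rw [dist_eq_norm] at this
  exact this

/-- The kernel of a module morphism as a left Banach module. -/
noncomputable def auxKer {A : Type} [NonUnitalNormedRing A] [NormedSpace ℂ A]
    [IsScalarTower ℂ A A] [SMulCommClass ℂ A A]
    {X Y : Type} [NormedAddCommGroup X] [NormedSpace ℂ X]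
    [NormedAddCommGroup Y] [NormedSpace ℂ Y]
    (MX : LeftBanachMod A X) (MY : LeftBanachMod A Y)
    (f : X →L[ℂ] Y) (hf : ∀ a, f.comp (MX.l a) = (MY.l a).comp f) :
    LeftBanachMod A (LinearMap.ker (f : X →ₗ[ℂ] Y)) where
  l a := ((MX.l a).comp (LinearMap.ker (f : X →ₗ[ℂ] Y)).subtypeL).codRestrict _ (by
    intro x
    have h := congrArg (fun g => g (x : X)) (hf a)
    have hx : f (x : X) = 0 := x.2
    simp only [ContinuousLinearMap.comp_apply, hx, map_zero] at h
    exact h)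
  l_add a b := by
    ext x
    simp [MX.l_add]
    rfl
  l_smul c a := by
    ext x
    simp [MX.l_smul]
    rfl
  l_bound := by
    obtain ⟨C, hC⟩ := MX.l_bound
    refine ⟨C, fun a => ContinuousLinearMap.opNorm_le_bound _
      ((norm_nonneg _).trans (hC a)) fun x => ?_⟩
    exact ((MX.l a).le_opNorm x).trans (mul_le_mul_of_nonneg_right (hC a) (norm_nonneg _))
  l_mul a b := by
    ext x
    simp [MX.l_mul]
    rfl

/-- The bimodule of bounded operators between left Banach modules. -/
noncomputable def auxHom {A : Type} [NonUnitalNormedRing A] [NormedSpace ℂ A]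
    [IsScalarTower ℂ A A] [SMulCommClass ℂ A A]
    {K Y : Type} [NormedAddCommGroup K] [NormedSpace ℂ K]
    [NormedAddCommGroup Y] [NormedSpace ℂ Y]
    (MK : LeftBanachMod A K) (MY : LeftBanachMod A Y) :
    BanachBimod A (Y →L[ℂ] K) where
  l a := ContinuousLinearMap.compL ℂ Y K K (MK.l a)
  r a := (ContinuousLinearMap.compL ℂ Y Y K).flip (MY.l a)
  l_add a b := by simp only [MK.l_add, map_add]
  l_smul c a := by simp only [MK.l_smul, map_smul]
  r_add a b := by simp only [MY.l_add, map_add]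
  r_smul c a := by simp only [MY.l_smul, map_smul]
  l_bound := by
    obtain ⟨C, hC⟩ := MK.l_bound
    refine ⟨C, fun a => ContinuousLinearMap.opNorm_le_bound _
      ((norm_nonneg _).trans (hC a)) fun g => ?_⟩
    exact ((MK.l a).opNorm_comp_le g).trans (mul_le_mul_of_nonneg_right (hC a) (norm_nonneg _))
  r_bound := by
    obtain ⟨C, hC⟩ := MY.l_bound
    refine ⟨C, fun a => ContinuousLinearMap.opNorm_le_bound _
      ((norm_nonneg _).trans (hC a)) fun g => ?_⟩
    refine (g.opNorm_comp_le (MY.l a)).trans ?_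
    rw [mul_comm]
    exact mul_le_mul_of_nonneg_right (hC a) (norm_nonneg _)
  l_mul a b := by ext g y; simp [MK.l_mul]
  r_mul a b := by ext g y; simp [MY.l_mul]
  lr_comm a b := by ext g y; simp

/-- Let `A` be an approximately amenable Banach algebra, `X`, `Y` left Banach
`A`-modules and `f : X → Y` a bounded left `A`-module morphism with a bounded linear right
inverse `F`. Then there is a net `(f_α)` of bounded linear right inverses of `f` with
`‖a·f_α − f_α·a‖ → 0` for every `a ∈ A` (with the bimodule actions
`(a·g)(y) = a(g(y))`, `(g·a)(y) = g(a·y)` on `B(Y,X)`). -/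
theorem approxAmenable_right_inverse_net
    (A : Type) [NonUnitalNormedRing A] [NormedSpace ℂ A]
    [IsScalarTower ℂ A A] [SMulCommClass ℂ A A] [CompleteSpace A]
    (hA : ApproximatelyAmenable A)
    (X Y : Type) [NormedAddCommGroup X] [NormedSpace ℂ X] [CompleteSpace X]
    [NormedAddCommGroup Y] [NormedSpace ℂ Y] [CompleteSpace Y]
    (MX : LeftBanachMod A X) (MY : LeftBanachMod A Y)
    (f : X →L[ℂ] Y) (hf : ∀ a, f.comp (MX.l a) = (MY.l a).comp f)
    (F : Y →L[ℂ] X) (hF : f.comp F = ContinuousLinearMap.id ℂ Y) :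
    ∃ (ι : Type) (φ : Filter ι) (g : ι → (Y →L[ℂ] X)), φ.NeBot ∧
      (∀ i, f.comp (g i) = ContinuousLinearMap.id ℂ Y) ∧
      ∀ a : A, Tendsto (fun i => ‖(MX.l a).comp (g i) - (g i).comp (MY.l a)‖) φ (𝓝 0) := by
  classical
  let K := LinearMap.ker (f : X →ₗ[ℂ] Y)
  let MK : LeftBanachMod A K := auxKer MX MY f hf
  let M : BanachBimod A (Y →L[ℂ] K) := auxHom MK MY
  have hfl : ∀ a x, f (MX.l a x) = MY.l a (f x) := fun a x =>
    congrArg (fun g => g x) (hf a)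
  have hFl : ∀ y, f (F y) = y := fun y => congrArg (fun g => g y) hF
  obtain ⟨C₁, hC₁⟩ := MX.l_bound
  obtain ⟨C₂, hC₂⟩ := MY.l_bound
  let D₀ : A →ₗ[ℂ] (Y →L[ℂ] K) :=
    { toFun := fun a => ((MX.l a).comp F - F.comp (MY.l a)).codRestrict K (by
        intro y
        change f _ = 0
        simp [hfl, hFl])
      map_add' := by
        intro a b
        ext y
        simp [MX.l_add, MY.l_add]
        abel
      map_smul' := by
        intro c a
        ext y
        simp [MX.l_smul, MY.l_smul, smul_sub] }
  let D : A →L[ℂ] (Y →L[ℂ] K) := D₀.mkContinuous (C₁ * ‖F‖ + ‖F‖ * C₂) (by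
    intro a
    have h1 : ‖(MX.l a).comp F - F.comp (MY.l a)‖ ≤ (C₁ * ‖F‖ + ‖F‖ * C₂) * ‖a‖ := by
      calc ‖(MX.l a).comp F - F.comp (MY.l a)‖
          ≤ ‖(MX.l a).comp F‖ + ‖F.comp (MY.l a)‖ := norm_sub_le _ _
        _ ≤ ‖MX.l a‖ * ‖F‖ + ‖F‖ * ‖MY.l a‖ :=
            add_le_add (ContinuousLinearMap.opNorm_comp_le _ _)
              (ContinuousLinearMap.opNorm_comp_le _ _)
        _ ≤ (C₁ * ‖a‖) * ‖F‖ + ‖F‖ * (C₂ * ‖a‖) := by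
            gcongr
            · exact hC₁ a
            · exact hC₂ a
        _ = _ := by ring
    refine ContinuousLinearMap.opNorm_le_bound (D₀ a) ((norm_nonneg _).trans h1) fun y => ?_
    exact (ContinuousLinearMap.le_opNorm ((MX.l a).comp F - F.comp (MY.l a)) y).trans
      (mul_le_mul_of_nonneg_right h1 (norm_nonneg _)))
  have hDapp : ∀ a y, ((D a y : K) : X) = MX.l a (F y) - F (MY.l a y) := fun a y => rfl
  have hMl : ∀ a (g : Y →L[ℂ] K) y, ((M.l a g y : K) : X) = MX.l a (g y) := fun a g y => rfl
  have hMr : ∀ a (g : Y →L[ℂ] K) y, M.r a g y = g (MY.l a y) := fun a g y => rfl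
  have hD : M.IsDerivation D := by
    intro a b
    ext y
    simp only [ContinuousLinearMap.add_apply, Submodule.coe_add, hDapp, hMl, hMr, MX.l_mul,
      MY.l_mul, ContinuousLinearMap.comp_apply, map_sub]
    abel
  have main := fun p : Finset A × ℕ =>
    aux_approx_contractible hA M D hD p.1 (1 / ((p.2 : ℝ) + 1)) Nat.one_div_pos_of_nat
  choose z hz using main
  refine ⟨Finset A × ℕ, atTop, fun p => F - K.subtypeL.comp (z p), inferInstance, ?_, ?_⟩
  · intro p
    ext y
    have : f (z p y : X) = 0 := (z p y).2
    simp [hFl, this]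
  · intro a
    have hle : ∀ p : Finset A × ℕ,
        ‖(MX.l a).comp (F - K.subtypeL.comp (z p)) - (F - K.subtypeL.comp (z p)).comp (MY.l a)‖
          ≤ ‖D a - (M.l a (z p) - M.r a (z p))‖ := by
      intro p
      refine ContinuousLinearMap.opNorm_le_bound _ (ContinuousLinearMap.opNorm_nonneg _) fun y => ?_
      refine le_trans (le_of_eq ?_)
        (ContinuousLinearMap.le_opNorm (D a - (M.l a (z p) - M.r a (z p))) y)
      change _ = ‖(((D a - (M.l a (z p) - M.r a (z p))) y : K) : X)‖
      congr 1
      simp only [ContinuousLinearMap.sub_apply, Submodule.coe_sub, hDapp, hMl, hMr,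
        ContinuousLinearMap.comp_apply, map_sub, Submodule.subtypeL_apply]
      abel
    have hlim : Tendsto (fun p : Finset A × ℕ => 1 / ((p.2 : ℝ) + 1)) atTop (𝓝 0) := by
      rw [← prod_atTop_atTop_eq]
      exact (tendsto_one_div_add_atTop_nhds_zero_nat (𝕜 := ℝ)).comp tendsto_snd
    refine squeeze_zero' (Eventually.of_forall fun _ => norm_nonneg _) ?_ hlim
    filter_upwards [eventually_ge_atTop (({a} : Finset A), 0)] with p hp
    exact (hle p).trans (hz p a (hp.1 (Finset.mem_singleton_self a))).le
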